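/- arXiv:1801.02105 — 6 statements merged into one kernel-verified Lean document; each statement's English description precedes it below -/
import Mathlib

section
/- Let Γ be a group and N a characteristic subgroup of Γ (i.e. invariant under every automorphism of Γ). If the quotient group Γ/N has the R∞-property, then Γ has the R∞-property. -/
/-- `x` and `y` are `φ`-twisted conjugate: there is `g` with `y = g * x * φ(g)⁻¹`. -/
def TwistedConj {Γ : Type*} [Group Γ] (φ : Γ ≃* Γ) (x y : Γ) : Prop :=
  ∃ g : Γ, y = g * x * (φ g)⁻¹

/-- A group has the `R∞`-property if every automorphism has infinitely many twisted
conjugacy classes. -/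
def RInfinity (Γ : Type*) [Group Γ] : Prop :=
  ∀ φ : Γ ≃* Γ, Infinite (Quot (TwistedConj φ))

/-- If `N` is a characteristic subgroup of `Γ` and `Γ/N` has the `R∞`-property,
then so does `Γ`. -/
theorem stmt1 {Γ : Type*} [Group Γ] (N : Subgroup Γ) [N.Characteristic]
    (h : RInfinity (Γ ⧸ N)) : RInfinity Γ := by
  intro φ
  have hN : N.map (φ : Γ →* Γ) = N :=
    Subgroup.characteristic_iff_map_eq.mp inferInstance φ
  let ψ : (Γ ⧸ N) ≃* (Γ ⧸ N) := QuotientGroup.congr N N φ hN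
  have hψ : ∀ g : Γ, ψ (g : Γ ⧸ N) = ((φ g : Γ) : Γ ⧸ N) := fun g => rfl
  haveI := h ψ
  let f : Quot (TwistedConj φ) → Quot (TwistedConj ψ) :=
    Quot.map (fun x : Γ => (x : Γ ⧸ N)) (by
      rintro x y ⟨g, rfl⟩
      exact ⟨(g : Γ ⧸ N), by rw [hψ]; rfl⟩)
  refine Infinite.of_surjective f ?_
  rintro ⟨q⟩
  obtain ⟨x, rfl⟩ := QuotientGroup.mk_surjective q
  exact ⟨Quot.mk _ x, rfl⟩
end

section
/- Let Γ be a group and N a characteristic subgroup of Γ such that the quotient Γ/N is finite. If N has the R∞-property, then Γ has the R∞-property. -/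
theorem TwistedConj.equivalence {Γ : Type*} [Group Γ] (φ : Γ ≃* Γ) :
    Equivalence (TwistedConj φ) where
  refl x := ⟨1, by simp⟩
  symm := by
    rintro x y ⟨g, rfl⟩
    exact ⟨g⁻¹, by simp [mul_assoc]⟩
  trans := by
    rintro x y z ⟨g, rfl⟩ ⟨k, rfl⟩
    exact ⟨k * g, by simp [mul_assoc]⟩

theorem TwistedConj.of_quot_eq {Γ : Type*} [Group Γ] (φ : Γ ≃* Γ) {x y : Γ}
    (h : Quot.mk (TwistedConj φ) x = Quot.mk (TwistedConj φ) y) : TwistedConj φ x y :=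
  (TwistedConj.equivalence φ).eqvGen_iff.mp (Quot.eqvGen_exact h)

/-- If `N` is a characteristic subgroup of `Γ` with finite quotient `Γ/N`, and `N` has
the `R∞`-property, then so does `Γ`. -/
theorem stmt2 {Γ : Type*} [Group Γ] (N : Subgroup Γ) [N.Characteristic]
    (hfin : Finite (Γ ⧸ N)) (h : RInfinity N) : RInfinity Γ := by
  intro φ
  by_contra hf
  rw [not_infinite_iff_finite] at hf
  let ψ : N ≃* N := (φ.subgroupMap N).trans
    (MulEquiv.subgroupCongr (Subgroup.characteristic_iff_map_eq.mp inferInstance φ))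
  have hψ : ∀ n : N, ((ψ n : N) : Γ) = φ n := fun n => rfl
  have key : ∀ c : Quot (TwistedConj ψ), ∃ g : Γ,
      (c.out : Γ) = g * (Quot.mk (TwistedConj φ) (c.out : Γ)).out * (φ g)⁻¹ := fun c =>
    TwistedConj.of_quot_eq φ (Quot.out_eq _)
  choose g hg using key
  have hinj : Function.Injective (fun c : Quot (TwistedConj ψ) =>
      ((Quot.mk (TwistedConj φ) (c.out : Γ), (g c : Γ ⧸ N)) :
        Quot (TwistedConj φ) × (Γ ⧸ N))) := by
    intro c d hcd
    obtain ⟨h1, h2⟩ := Prod.mk.inj hcd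
    have hm : g d * (g c)⁻¹ ∈ N := by
      have := QuotientGroup.eq.mp h2
      exact (Subgroup.Normal.mem_comm_iff inferInstance).mp this
    rw [← Quot.out_eq c, ← Quot.out_eq d]
    apply Quot.sound
    refine ⟨⟨_, hm⟩, ?_⟩
    apply Subtype.ext
    have hc := hg c
    have hd := hg d
    rw [← h1] at hd
    generalize (Quot.mk (TwistedConj φ) (c.out : Γ)).out = r at hc hd
    simp only [Subgroup.coe_mul, Subgroup.coe_inv, hψ]
    rw [hc, hd]
    simp [mul_assoc]
  exact (not_infinite_iff_finite.mpr (Finite.of_injective _ hinj)) (h ψ)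
end

section
/- Let r ≥ 1, let G₀, G₁, …, G_{r-1} be groups, and for each i let eᵢ : Gᵢ ≃ G_{i+1} be a group isomorphism (indices taken modulo r, so e_{r-1} : G_{r-1} ≃ G₀). Let Γ = G₀ × G₁ × ⋯ × G_{r-1} and let Φ : Γ → Γ be the automorphism Φ(x₀, x₁, …, x_{r-1}) = (e_{r-1}(x_{r-1}), e₀(x₀), …, e_{r-2}(x_{r-2})). Let ψ = e_{r-1} ∘ e_{r-2} ∘ ⋯ ∘ e₀ : G₀ → G₀. If the elements (x₁, 1, …, 1) and (y₁, 1, …, 1) of Γ (supported in the first coordinate) are Φ-twisted conjugate in Γ, then x₁ and y₁ are ψ-twisted conjugate in G₀. -/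
/-- Let `r = n+1 ≥ 1`, let `G₀, …, G_{r-1}` be groups with isomorphisms
`eᵢ : Gᵢ ≃* G_{i+1}` (indices mod `r`), let `Γ = G₀ × ⋯ × G_{r-1}` and let `Φ` be the
automorphism with `Φ(x)_{i+1} = eᵢ(xᵢ)` (indices mod `r`), i.e.
`Φ(x₀, …, x_{r-1}) = (e_{r-1}(x_{r-1}), e₀(x₀), …, e_{r-2}(x_{r-2}))`.  Let
`ψ = e_{r-1} ∘ ⋯ ∘ e₀ : G₀ ≃* G₀` (characterized by `(Φ^[r] x) 0 = ψ (x 0)`).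
If `(x₁, 1, …, 1)` and `(y₁, 1, …, 1)` are `Φ`-twisted conjugate in `Γ`, then `x₁`
and `y₁` are `ψ`-twisted conjugate in `G₀`. -/
theorem stmt5 {n : ℕ} (G : Fin (n + 1) → Type*) [∀ i, Group (G i)]
    (e : ∀ i : Fin (n + 1), G i ≃* G (i + 1))
    (Φ : (∀ i, G i) ≃* (∀ i, G i))
    (hΦ : ∀ (x : ∀ i, G i) (i : Fin (n + 1)), Φ x (i + 1) = e i (x i))
    (ψ : G 0 ≃* G 0)
    (hψ : ∀ x : ∀ i, G i, (⇑Φ)^[n + 1] x 0 = ψ (x 0))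
    (x₁ y₁ : G 0)
    (h : TwistedConj Φ (Pi.mulSingle 0 x₁) (Pi.mulSingle 0 y₁)) :
    TwistedConj ψ x₁ y₁ := by
  obtain ⟨g, hg⟩ := h
  have hloc : ∀ (x y : ∀ i, G i) (i j : Fin (n + 1)), i + 1 = j → x i = y i →
      Φ x j = Φ y j := by
    intro x y i j hij hxy
    subst hij
    rw [hΦ, hΦ, hxy]
  have hne : ∀ j : Fin (n + 1), j ≠ 0 → Φ g j = g j := by
    intro j hj
    have h1 := congrFun hg j
    simp only [Pi.mul_apply, Pi.inv_apply, Pi.mulSingle_eq_of_ne hj, mul_one] at h1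
    exact (mul_inv_eq_one.mp h1.symm).symm
  have key : ∀ k : ℕ, ∀ j : Fin (n + 1), k ≤ j.val → (⇑Φ)^[k] g j = g j := by
    intro k
    induction k with
    | zero => intro j _; rfl
    | succ k ih =>
      intro j hj
      have hj0 : j ≠ 0 := by
        rintro rfl
        simp at hj
      rw [Function.iterate_succ_apply', ← hne j hj0]
      have hjl := j.isLt
      refine hloc _ _ ⟨j.val - 1, by omega⟩ j ?_ (ih _ (by simp only; omega))
      apply Fin.ext
      rw [Fin.val_add_one_of_lt']
      · simp only; omega
      · simp only; omega
  have h0 : Φ g 0 = ψ (g 0) := by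
    rw [← hψ, Function.iterate_succ_apply']
    exact (hloc _ _ (Fin.last n) 0 (Fin.last_add_one n) (key n _ (by simp))).symm
  refine ⟨g 0, ?_⟩
  have h1 := congrFun hg 0
  simpa [h0] using h1
end

section
/- Let r ≥ 1, let G₀, G₁, …, G_{r-1} be groups with group isomorphisms eᵢ : Gᵢ ≃ G_{i+1} (indices modulo r), let Γ = G₀ × ⋯ × G_{r-1}, let Φ : Γ → Γ be the automorphism Φ(x₀, …, x_{r-1}) = (e_{r-1}(x_{r-1}), e₀(x₀), …, e_{r-2}(x_{r-2})), and let ψ = e_{r-1} ∘ ⋯ ∘ e₀ : G₀ → G₀. If ψ has infinitely many twisted conjugacy classes in G₀, then Φ has infinitely many twisted conjugacy classes in Γ. -/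
/-- The partial norm `x * Φ x * ⋯ * Φ^(k-1) x`. -/
def partialNorm {Γ : Type*} [Group Γ] (φ : Γ ≃* Γ) (x : Γ) : ℕ → Γ
  | 0 => 1
  | k + 1 => partialNorm φ x k * (⇑φ)^[k] x

theorem partialNorm_conj {Γ : Type*} [Group Γ] (φ : Γ ≃* Γ) (x g : Γ) (k : ℕ) :
    partialNorm φ (g * x * (φ g)⁻¹) k = g * partialNorm φ x k * ((⇑φ)^[k] g)⁻¹ := by
  induction k with
  | zero => simp [partialNorm]
  | succ k ih =>
    simp only [partialNorm, ih, iterate_map_mul, iterate_map_inv, Function.iterate_succ_apply]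
    group

/-- Let `r = n+1 ≥ 1`, let `G₀, …, G_{r-1}` be groups with isomorphisms
`eᵢ : Gᵢ ≃* G_{i+1}` (indices mod `r`), let `Γ = G₀ × ⋯ × G_{r-1}` and let `Φ` be the
automorphism with `Φ(x)_{i+1} = eᵢ(xᵢ)` (indices mod `r`), i.e.
`Φ(x₀, …, x_{r-1}) = (e_{r-1}(x_{r-1}), e₀(x₀), …, e_{r-2}(x_{r-2}))`.  Let
`ψ = e_{r-1} ∘ ⋯ ∘ e₀ : G₀ ≃* G₀` (characterized by `(Φ^[r] x) 0 = ψ (x 0)`).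
If `ψ` has infinitely many twisted conjugacy classes in `G₀`, then `Φ` has infinitely
many twisted conjugacy classes in `Γ`. -/
theorem stmt6 {n : ℕ} (G : Fin (n + 1) → Type*) [∀ i, Group (G i)]
    (e : ∀ i : Fin (n + 1), G i ≃* G (i + 1))
    (Φ : (∀ i, G i) ≃* (∀ i, G i))
    (hΦ : ∀ (x : ∀ i, G i) (i : Fin (n + 1)), Φ x (i + 1) = e i (x i))
    (ψ : G 0 ≃* G 0)
    (hψ : ∀ x : ∀ i, G i, (⇑Φ)^[n + 1] x 0 = ψ (x 0))
    (h : Infinite (Quot (TwistedConj ψ))) :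
    Infinite (Quot (TwistedConj Φ)) := by
  have hsucc : ∀ k : ℕ, Fin.ofNat (n + 1) (k + 1) = Fin.ofNat (n + 1) k + 1 := by
    intro k
    apply Fin.ext
    simp [Fin.val_add]
  have key : ∀ (k : ℕ) (x : ∀ i, G i) (i : Fin (n + 1)), x i = 1 →
      (⇑Φ)^[k] x (i + Fin.ofNat (n + 1) k) = 1 := by
    intro k x i hx
    induction k with
    | zero =>
      have h0 : i + Fin.ofNat (n + 1) 0 = i := add_zero i
      rw [h0]
      exact hx
    | succ k ih =>
      rw [hsucc, ← add_assoc, Function.iterate_succ_apply', hΦ, ih, map_one]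
  have hsingle : ∀ (a : G 0) (k : ℕ), k ≤ n →
      partialNorm Φ (Pi.mulSingle 0 a) (k + 1) 0 = a := by
    intro a k hk
    induction k with
    | zero => simp [partialNorm]
    | succ k ih =>
      have h0 : (-(Fin.ofNat (n + 1) (k + 1))) ≠ 0 := by
        rw [neg_ne_zero]
        intro h0
        have := Nat.dvd_of_mod_eq_zero (congrArg Fin.val h0)
        have := Nat.le_of_dvd (Nat.succ_pos k) this
        omega
      have h1 := key (k + 1) (Pi.mulSingle 0 a) (-(Fin.ofNat (n + 1) (k + 1)))
        (Pi.mulSingle_eq_of_ne h0 a)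
      rw [neg_add_cancel] at h1
      rw [partialNorm, Pi.mul_apply, ih (by omega), h1, mul_one]
  let f : Quot (TwistedConj Φ) → Quot (TwistedConj ψ) :=
    Quot.map (fun x => partialNorm Φ x (n + 1) 0) (by
      rintro x y ⟨g, rfl⟩
      refine ⟨g 0, ?_⟩
      simp only [partialNorm_conj, Pi.mul_apply, Pi.inv_apply, hψ])
  refine Infinite.of_surjective f ?_
  rintro ⟨a⟩
  exact ⟨Quot.mk _ (Pi.mulSingle 0 a), congrArg (Quot.mk _) (hsingle a n le_rfl)⟩
end

section
/- The group SL(2, ℤ) of 2 × 2 integer matrices of determinant 1 has the R∞-property: for every automorphism φ of SL(2, ℤ), there are infinitely many φ-twisted conjugacy classes. -/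
local notation "Mat" => Matrix (Fin 2) (Fin 2) ℤ

open Matrix MatrixGroups in
lemma cm (g h : SL(2, ℤ)) : ((g * h : SL(2, ℤ)) : Mat) = (g : Mat) * (h : Mat) := rfl

open Matrix MatrixGroups in
/-- Trace-zero consequence of `M ^ 4 = 1`, `M ^ 2 ≠ 1`. -/
lemma aux_order4 (a b c d : ℤ) (hdet : a * d - b * c = 1)
    (hM : (!![a, b; c, d] : Matrix (Fin 2) (Fin 2) ℤ) ^ 4 = 1)
    (hM2 : (!![a, b; c, d] : Matrix (Fin 2) (Fin 2) ℤ) ^ 2 ≠ 1) : a + d = 0 := by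
  by_contra hu
  have h2 : (a + d) ^ 2 - 2 ≠ 0 := by
    intro h
    have h1 : (a + d) < 2 := by nlinarith
    have h3 : -2 < (a + d) := by nlinarith
    interval_cases (a + d) <;> simp at h
  have hw : (a + d) * ((a + d) ^ 2 - 2) ≠ 0 := mul_ne_zero hu h2
  have e00 := congrFun (congrFun hM 0) 0
  have e01 := congrFun (congrFun hM 0) 1
  have e10 := congrFun (congrFun hM 1) 0
  have e11 := congrFun (congrFun hM 1) 1
  simp [pow_succ, Matrix.mul_apply, Fin.sum_univ_two] at e00 e01 e10 e11
  have hb : b = 0 := by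
    apply (mul_eq_zero.mp (?_ : ((a + d) * ((a + d) ^ 2 - 2)) * b = 0)).resolve_left hw
    linear_combination e01 + (2 * a * b + 2 * b * d) * hdet
  have hc : c = 0 := by
    apply (mul_eq_zero.mp (?_ : ((a + d) * ((a + d) ^ 2 - 2)) * c = 0)).resolve_left hw
    linear_combination e10 + (2 * a * c + 2 * c * d) * hdet
  subst hb hc
  have had : a * d = 1 := by linarith
  rcases Int.eq_one_or_neg_one_of_mul_eq_one' had with ⟨rfl, rfl⟩ | ⟨rfl, rfl⟩
  · apply hM2; ext i j; fin_cases i <;> fin_cases j <;> simp [pow_succ, Matrix.mul_apply]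
  · apply hM2; ext i j; fin_cases i <;> fin_cases j <;> simp [pow_succ, Matrix.mul_apply]

/-- `M ^ 3 = -1`, `M ^ 2 ≠ 1` gives trace one. -/
lemma aux_order6 (a b c d : ℤ) (hdet : a * d - b * c = 1)
    (hM : (!![a, b; c, d] : Matrix (Fin 2) (Fin 2) ℤ) ^ 3 = -1)
    (hM2 : (!![a, b; c, d] : Matrix (Fin 2) (Fin 2) ℤ) ^ 2 ≠ 1) : a + d = 1 := by
  by_contra hu
  have e00 := congrFun (congrFun hM 0) 0
  have e01 := congrFun (congrFun hM 0) 1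
  have e10 := congrFun (congrFun hM 1) 0
  have e11 := congrFun (congrFun hM 1) 1
  simp [pow_succ, Matrix.mul_apply, Fin.sum_univ_two] at e00 e01 e10 e11
  have hw : (a + d) ^ 2 - 1 ≠ 0 := by
    intro h
    have h1 : a + d = -1 := by
      have : (a + d - 1) * (a + d + 1) = 0 := by linarith
      rcases mul_eq_zero.mp this with h | h <;> omega
    have : ((a + d) ^ 2 - 1) * a - (a + d) = -1 := by
      linear_combination e00 + (a + d) * hdet - (-a) * hdet
    rw [h, h1] at this
    simp at this
  have hb : b = 0 := by
    apply (mul_eq_zero.mp (?_ : ((a + d) ^ 2 - 1) * b = 0)).resolve_left hw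
    linear_combination e01 + b * hdet
  have hc : c = 0 := by
    apply (mul_eq_zero.mp (?_ : ((a + d) ^ 2 - 1) * c = 0)).resolve_left hw
    linear_combination e10 + c * hdet
  subst hb hc
  have had : a * d = 1 := by linarith
  rcases Int.eq_one_or_neg_one_of_mul_eq_one' had with ⟨rfl, rfl⟩ | ⟨rfl, rfl⟩
  · apply hM2; ext i j; fin_cases i <;> fin_cases j <;> simp [pow_succ, Matrix.mul_apply]
  · apply hM2; ext i j; fin_cases i <;> fin_cases j <;> simp [pow_succ, Matrix.mul_apply]

/-- Existence of a nonzero intertwiner. -/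
lemma aux_intertwiner (a b c p q r s e : ℤ) (he : e = 1 ∨ e = -1)
    (hS : -(a * a) - b * c = 1) (hT : p * s - q * r = 1) (htr : p + s = 2 * e)
    (hu : a * p + b * r + c * q - a * s = 1) :
    ∃ A : Matrix (Fin 2) (Fin 2) ℤ, A ≠ 0 ∧
      A * !![0, -1; 1, 0] = e • (!![a, b; c, -a] * A) ∧
      A * !![1, 1; 0, 1] = e • (!![p, q; r, s] * A) := by
  have he2 : e * e = 1 := by rcases he with rfl | rfl <;> rfl
  have hN : (p - e) * (s - e) - q * r = 0 := by linear_combination hT - e * htr - he2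
  have key : ∀ x y : ℤ, (x ≠ 0 ∨ y ≠ 0) → p * x + q * y = e * x → r * x + s * y = e * y →
      (∃ w z : ℤ, x = (p - e) * w + q * z ∧ y = r * w + (s - e) * z) → 
      ∃ A : Matrix (Fin 2) (Fin 2) ℤ, A ≠ 0 ∧
      A * !![0, -1; 1, 0] = e • (!![a, b; c, -a] * A) ∧
      A * !![1, 1; 0, 1] = e • (!![p, q; r, s] * A) := by
    rintro x y hxy h1 h2 ⟨w, z, hw, hz⟩
    refine ⟨!![x, e * (a * x + b * y); y, e * (c * x - a * y)], ?_, ?_, ?_⟩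
    · intro h
      have e00 := congrFun (congrFun h 0) 0
      have e10 := congrFun (congrFun h 1) 0
      simp at e00 e10
      tauto
    · ext i j
      fin_cases i <;> fin_cases j <;>
        simp only [Matrix.mul_apply, Fin.sum_univ_two, Matrix.smul_apply, smul_eq_mul,
          Matrix.of_apply, Matrix.cons_val, Fin.zero_eta, Fin.mk_one, Fin.isValue]
      · ring
      · linear_combination x * hS + (-(a * a) - b * c) * x * he2
      · ring
      · linear_combination y * hS + (-(a * a) - b * c) * y * he2
    · have g1 : (p - e) * (a * x + b * y) + q * (c * x - a * y) = x := by
        rw [hw, hz]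
        linear_combination ((p - e) * w + q * z) * hu + (a * w + b * z) * hN
      have g2 : r * (a * x + b * y) + (s - e) * (c * x - a * y) = y := by
        rw [hw, hz]
        linear_combination (r * w + (s - e) * z) * hu + (c * w - a * z) * hN
      ext i j
      fin_cases i <;> fin_cases j <;>
        simp only [Matrix.mul_apply, Fin.sum_univ_two, Matrix.smul_apply, smul_eq_mul,
          Matrix.of_apply, Matrix.cons_val, Fin.zero_eta, Fin.mk_one, Fin.isValue]
      · linear_combination (-e) * h1 - x * he2
      · linear_combination (-1) * g1 - (p * (a * x + b * y) + q * (c * x - a * y)) * he2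
      · linear_combination (-e) * h2 - y * he2
      · linear_combination (-1) * g2 - (r * (a * x + b * y) + s * (c * x - a * y)) * he2
  by_cases h : p - e ≠ 0 ∨ r ≠ 0
  · refine key (p - e) r h ?_ ?_ ⟨1, 0, by ring, by ring⟩
    · linear_combination (p - e) * htr - hN
    · linear_combination r * htr
  · push Not at h
    obtain ⟨hp, hr⟩ := h
    have hs : s - e = 0 := by linarith
    refine key q (s - e) ?_ ?_ ?_ ⟨0, 1, by ring, by ring⟩
    · left
      rintro rfl
      have : p = s := by linarith
      subst this
      subst hr
      simp at hu
    · rw [hs]; linear_combination q * hp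
    · rw [hs, hr]; ring

open Matrix MatrixGroups ModularGroup in
lemma aux_trace (A : Matrix (Fin 2) (Fin 2) ℤ) (n : ℤ) :
    (((T ^ n : SL(2, ℤ)) : Mat) * A).trace = A 0 0 + A 1 1 + n * A 1 0 ∧
    (((S * T ^ n * S⁻¹ : SL(2, ℤ)) : Mat) * A).trace = A 0 0 + A 1 1 - n * A 0 1 ∧
    (((T ^ n * S : SL(2, ℤ)) : Mat) * A).trace = A 0 1 - A 1 0 + n * A 0 0 ∧
    (((S * T ^ n : SL(2, ℤ)) : Mat) * A).trace = A 0 1 - A 1 0 + n * A 1 1 := by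
  refine ⟨?_, ?_, ?_, ?_⟩ <;>
  simp [S_inv, coe_T_zpow, coe_S, Matrix.trace, Fin.sum_univ_two, Matrix.mul_apply,
    Matrix.vecMul, Matrix.vecHead, Matrix.vecTail] <;> ring

open Matrix MatrixGroups ModularGroup in
/-- Twisted traces give infinitely many classes. -/
lemma aux_infinite (φ : SL(2, ℤ) ≃* SL(2, ℤ)) (A : Matrix (Fin 2) (Fin 2) ℤ) (hA : A ≠ 0)
    (h : ∀ g : SL(2, ℤ), A * (g : Mat) = ((φ g) : Mat) * A ∨ A * (g : Mat) = -(((φ g) : Mat) * A)) :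
    Infinite (Quot (TwistedConj φ)) := by
  let f : Quot (TwistedConj φ) → ℕ := Quot.lift (fun x => ((x : Mat) * A).trace.natAbs) (by
    rintro x y ⟨g, rfl⟩
    have h1 := h g⁻¹
    rw [map_inv] at h1
    have h2 : ((x : Mat) * A).trace = ((g : Mat) * ((x : Mat) * (A * ((g⁻¹ : SL(2, ℤ)) : Mat)))).trace := by
      rw [Matrix.trace_mul_comm (g : Mat), Matrix.mul_assoc, Matrix.mul_assoc, 
        ← cm, inv_mul_cancel]
      simp
    show ((x : Mat) * A).trace.natAbs = (((g * x * (φ g)⁻¹) : Mat) * A).trace.natAbs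
    rw [h2]
    rcases h1 with h1 | h1
    · rw [h1]; simp only [cm, Matrix.mul_assoc]
    · rw [h1]; simp only [cm, Matrix.mul_assoc, mul_neg, 
        Matrix.trace_neg, Int.natAbs_neg])
  have main : ∀ (F : ℤ → SL(2, ℤ)) (m k : ℤ), k ≠ 0 → 
      (∀ n, (((F n) : Mat) * A).trace = m + n * k) → Infinite (Quot (TwistedConj φ)) := by
    intro F m k hk hF
    by_contra hfin
    rw [not_infinite_iff_finite] at hfin
    obtain ⟨B, hB⟩ := (Set.finite_range f).bddAbove
    have hb : ∀ n, (m + n * k).natAbs ≤ B := by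
      intro n
      rw [← hF n]
      exact hB ⟨Quot.mk _ (F n), rfl⟩
    have h1 := hb ((B + |m| + 1) * k)
    have h2 : (1 : ℤ) ≤ k * k := by nlinarith [mul_self_pos.mpr hk]
    have h3 : (m + (B + |m| + 1) * k * k) ≤ B := by omega
    have h4 : (B + |m| + 1) * 1 ≤ (B + |m| + 1) * (k * k) := by
      apply mul_le_mul_of_nonneg_left h2; positivity
    have := neg_abs_le m
    nlinarith
  by_cases h10 : A 1 0 = 0
  · by_cases h01 : A 0 1 = 0
    · by_cases h00 : A 0 0 = 0
      · by_cases h11 : A 1 1 = 0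
        · exfalso; apply hA; ext i j; fin_cases i <;> fin_cases j <;> simpa
        · exact main _ _ _ h11 (fun n => (aux_trace A n).2.2.2)
      · exact main _ _ _ h00 (fun n => (aux_trace A n).2.2.1)
    · exact main _ (A 0 0 + A 1 1) (-A 0 1) (by simpa using h01)
        (fun n => by rw [(aux_trace A n).2.1]; ring)
  · exact main _ _ _ h10 (fun n => (aux_trace A n).1)

open Matrix MatrixGroups ModularGroup in
lemma aux_span (φ : SL(2, ℤ) ≃* SL(2, ℤ)) (s t : Matrix (Fin 2) (Fin 2) ℤ) (τ : ℤ)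
    (hs : s = ((φ S) : Mat)) (ht : t = ((φ T) : Mat))
    (hss : s * s = -1) (htt : t * t = τ • t - 1) (hts : t * s = 1 + τ • s - s * t) :
    ∀ g : SL(2, ℤ), ∃ α β γ δ : ℤ, (g : Mat) = α • 1 + β • s + γ • t + δ • (s * t) := by
  have hsi : ((φ S⁻¹) : Mat) = -s := by
    rw [S_inv]
    have : (-S : SL(2, ℤ)) = S * S * S := by decide
    rw [this, map_mul, map_mul, cm, cm, ← hs, hss]
    simp
  have hti : ((φ T⁻¹) : Mat) = τ • 1 - t := by
    have h1 : ((φ T⁻¹) : Mat) * t = 1 := by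
      rw [ht, ← cm, ← map_mul]; simp
    have h2 : t * (τ • 1 - t) = 1 := by
      rw [mul_sub, htt, mul_smul_comm, mul_one]; simp only [sub_sub_cancel]
    calc ((φ T⁻¹) : Mat) = ((φ T⁻¹) : Mat) * (t * (τ • 1 - t)) := by rw [h2, mul_one]
      _ = _ := by rw [← mul_assoc, h1, one_mul]
  have hsst : s * (s * t) = -t := by rw [← mul_assoc, hss]; simp
  have htst : t * (s * t) = t + s := by
    rw [← mul_assoc, hts, sub_mul, add_mul, one_mul, smul_mul_assoc, mul_assoc, htt, mul_sub, mul_smul_comm, mul_one]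
    module
  have hL : ∀ α β γ δ : ℤ, s * (α • 1 + β • s + γ • t + δ • (s * t)) =
      (-β) • 1 + α • s + (-δ) • t + γ • (s * t) := by
    intro α β γ δ
    simp only [mul_add, mul_smul_comm, mul_one, hss, hsst]
    module
  have hR : ∀ α β γ δ : ℤ, t * (α • 1 + β • s + γ • t + δ • (s * t)) =
      (β - γ) • 1 + (β * τ + δ) • s + (α + γ * τ + δ) • t + (-β) • (s * t) := by
    intro α β γ δ
    simp only [mul_add, mul_smul_comm, mul_one, htt, hts, htst]
    module
  have key : ∀ g : SL(2, ℤ), ∃ α β γ δ : ℤ, ((φ g) : Mat) = α • 1 + β • s + γ • t + δ • (s * t) := by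
    intro g
    have hg : g ∈ Subgroup.closure {S, T} := by simp [SpecialLinearGroup.SL2Z_generators]
    induction hg using Subgroup.closure_induction_left with
    | one => exact ⟨1, 0, 0, 0, by simp⟩
    | mul_left x hx y hy ih =>
      obtain ⟨α, β, γ, δ, ih⟩ := ih
      rw [map_mul, cm, ih]
      rcases hx with rfl | rfl
      · rw [← hs, hL]; exact ⟨_, _, _, _, rfl⟩
      · rw [← ht, hR]; exact ⟨_, _, _, _, rfl⟩
    | inv_mul_cancel x hx y hy ih =>
      obtain ⟨α, β, γ, δ, ih⟩ := ih
      rw [map_mul, cm, ih]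
      rcases hx with rfl | rfl
      · rw [hsi, neg_mul, hL]; exact ⟨β, -α, δ, -γ, by module⟩
      · rw [hti, sub_mul, hR, smul_mul_assoc, one_mul]
        exact ⟨τ * α - (β - γ), τ * β - (β * τ + δ), τ * γ - (α + γ * τ + δ), τ * δ + β, by module⟩
  intro g
  simpa using key (φ.symm g)

open Matrix MatrixGroups ModularGroup in
/-- The trace of the image of `T` is `2` or `-2`. -/
lemma aux_trT (a b c p q r s : ℤ) 
    (hS : -(a * a) - b * c = 1) (hT : p * s - q * r = 1)
    (hu : a * p + b * r + c * q - a * s = 1)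
    (hspan : ∀ g : SL(2, ℤ), ∃ α β γ δ : ℤ, (g : Mat) = α • 1 + β • !![a, b; c, -a] +
      γ • !![p, q; r, s] + δ • (!![a, b; c, -a] * !![p, q; r, s])) :
    p + s = 2 ∨ p + s = -2 := by
  obtain ⟨D, hD⟩ : ∃ D, D = (p + s) ^ 2 - 3 := ⟨_, rfl⟩
  obtain ⟨K, hK⟩ : ∃ K : Mat, K = !![b * r - c * q, a * q + b * s - p * b + q * a;
    c * p - a * r - r * a - s * c, c * q - r * b] := ⟨_, rfl⟩
  have hdvd : ∀ g : SL(2, ℤ), D ∣ ((g : Mat) * K).trace := by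
    intro g
    obtain ⟨α, β, γ, δ, h⟩ := hspan g
    refine ⟨δ, ?_⟩
    rw [h, hK, hD]
    simp only [Matrix.trace, Matrix.diag, Matrix.mul_apply, Fin.sum_univ_two, Matrix.smul_apply,
      smul_eq_mul, Matrix.add_apply, Matrix.one_apply_eq, Matrix.of_apply, Matrix.cons_val,
      Fin.isValue, ne_eq, zero_ne_one, one_ne_zero, not_false_eq_true, Matrix.one_apply_ne]
    linear_combination (-δ) * ((4 * (p * s - q * r) - (p + s) ^ 2) * hS + 4 * hT -
      (a * p + b * r + c * q - a * s + 1) * hu)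
  have k10 : D ∣ K 1 0 := by
    have h0 := hdvd (T ^ (0 : ℤ))
    have h1 := hdvd (T ^ (1 : ℤ))
    rw [(aux_trace K _).1] at h0 h1
    have := dvd_sub h1 h0
    ring_nf at this
    exact this
  have k01 : D ∣ K 0 1 := by
    have h0 := hdvd (S * T ^ (0 : ℤ) * S⁻¹)
    have h1 := hdvd (S * T ^ (1 : ℤ) * S⁻¹)
    rw [(aux_trace K _).2.1] at h0 h1
    have := dvd_sub h0 h1
    ring_nf at this
    exact this
  have k00 : D ∣ K 0 0 := by
    have h0 := hdvd (T ^ (0 : ℤ) * S)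
    have h1 := hdvd (T ^ (1 : ℤ) * S)
    rw [(aux_trace K _).2.2.1] at h0 h1
    have := dvd_sub h1 h0
    ring_nf at this
    exact this
  have k11 : D ∣ K 1 1 := by
    have h0 := hdvd (S * T ^ (0 : ℤ))
    have h1 := hdvd (S * T ^ (1 : ℤ))
    rw [(aux_trace K _).2.2.2] at h0 h1
    have := dvd_sub h1 h0
    ring_nf at this
    exact this
  have hdet : K 0 0 * K 1 1 - K 0 1 * K 1 0 = -D := by
    rw [hK, hD]
    simp only [Matrix.of_apply, Matrix.cons_val, Fin.isValue]
    linear_combination (4 * (p * s - q * r) - (p + s) ^ 2) * hS + 4 * hT - (a * p + b * r + c * q - a * s + 1) * hu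
  have hdd : D * D ∣ D := by
    rw [← dvd_neg, ← hdet]
    exact dvd_sub (mul_dvd_mul k00 k11) (mul_dvd_mul k01 k10)
  have hb : ∀ m : ℤ, m ^ 2 ≤ 4 → m = -2 ∨ m = -1 ∨ m = 0 ∨ m = 1 ∨ m = 2 := by
    intro m hm
    have : m ≤ 2 := by nlinarith
    have : -2 ≤ m := by nlinarith
    omega
  obtain ⟨k, hk⟩ := hdd
  have hD0 : D ≠ 0 := by
    intro h0
    rw [h0] at hD
    rcases hb (p + s) (by linarith) with h | h | h | h | h <;> rw [h] at hD <;> simp at hD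
  have hDk : D * k = 1 := by
    apply mul_left_cancel₀ hD0
    linarith
  have hle : (p + s) ^ 2 ≤ 4 := by
    rcases Int.eq_one_or_neg_one_of_mul_eq_one hDk with h | h <;> linarith
  rcases Int.eq_one_or_neg_one_of_mul_eq_one hDk with h1 | h1 <;>
  rcases hb (p + s) hle with h | h | h | h | h <;> rw [h, h1] at hD <;> simp at hD <;> simp [h]

open Matrix MatrixGroups ModularGroup in
lemma cinj {g h : SL(2, ℤ)} (e : (g : Mat) = (h : Mat)) : g = h := Subtype.ext e

open Matrix MatrixGroups ModularGroup in
lemma main_aux (φ : SL(2, ℤ) ≃* SL(2, ℤ)) (a b c d p q r s : ℤ)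
    (hs : ((φ S : SL(2, ℤ)) : Mat) = !![a, b; c, d])
    (ht : ((φ T : SL(2, ℤ)) : Mat) = !![p, q; r, s]) :
    Infinite (Quot (TwistedConj φ)) := by
  have hdS : a * d - b * c = 1 := by
    have := (φ S).2
    rw [hs, Matrix.det_fin_two_of] at this
    exact this
  have hT : p * s - q * r = 1 := by
    have := (φ T).2
    rw [ht, Matrix.det_fin_two_of] at this
    exact this
  have had : a + d = 0 := by
    apply aux_order4 a b c d hdS
    · rw [← hs]
      have h : S * S * S * S = 1 := by decide
      have h2 := congrArg (fun g : SL(2, ℤ) => ((φ g : SL(2, ℤ)) : Mat)) h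
      simp only [map_mul, map_one, cm] at h2
      simp only [pow_succ, pow_zero, one_mul]
      exact h2
    · rw [← hs]
      intro h
      have h2 : S * S = 1 := by
        apply φ.injective
        apply cinj
        rw [map_mul, map_one, cm, ← pow_two, h]
        rfl
      exact absurd h2 (by decide)
  obtain rfl : d = -a := by linarith
  have hS : -(a * a) - b * c = 1 := by linarith
  have hss : (!![a, b; c, -a] * !![a, b; c, -a] : Mat) = -1 := by
    ext i j
    fin_cases i <;> fin_cases j <;> simp [Matrix.mul_apply, Fin.sum_univ_two] <;> linarith
  have hu : a * p + b * r + c * q - a * s = 1 := by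
    have hST : ((φ (S * T) : SL(2, ℤ)) : Mat) =
        !![a * p + b * r, a * q + b * s; c * p - a * r, c * q - a * s] := by
      rw [map_mul, cm, hs, ht]
      ext i j
      fin_cases i <;> fin_cases j <;> simp [Matrix.mul_apply, Fin.sum_univ_two] <;> ring
    have := aux_order6 (a * p + b * r) (a * q + b * s) (c * p - a * r) (c * q - a * s)
      (by linear_combination (p * s - q * r) * hS + hT) (by
        rw [← hST, ← hss, ← hs]
        have h : (S * T) * (S * T) * (S * T) = S * S := by decide
        have h2 := congrArg (fun g : SL(2, ℤ) => ((φ g : SL(2, ℤ)) : Mat)) h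
        rw [pow_succ, pow_two, ← cm, ← cm, ← map_mul, ← map_mul, h, map_mul, cm]) (by
        rw [← hST]
        intro h
        have h2 : (S * T) * (S * T) = 1 := by
          apply φ.injective
          apply cinj
          rw [map_mul φ (S * T), map_one, cm, ← pow_two, h]
          rfl
        exact absurd h2 (by decide))
    linarith
  have hspan := aux_span φ !![a, b; c, -a] !![p, q; r, s] (p + s) hs.symm ht.symm hss
    (by
      ext i j
      fin_cases i <;> fin_cases j <;> simp [Matrix.mul_apply, Fin.sum_univ_two] <;>
        first | ring1 | linear_combination (-1) * hT)
    (by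
      ext i j
      fin_cases i <;> fin_cases j <;> simp [Matrix.mul_apply, Fin.sum_univ_two] <;>
        first | ring1 | linear_combination hu)
  have htr := aux_trT a b c p q r s hS hT hu hspan
  obtain ⟨e, he, hte⟩ : ∃ e : ℤ, (e = 1 ∨ e = -1) ∧ p + s = 2 * e := by
    rcases htr with h | h
    · exact ⟨1, by simp, by linarith⟩
    · exact ⟨-1, by simp, by linarith⟩
  obtain ⟨A, hA, hAS, hAT⟩ := aux_intertwiner a b c p q r s e he hS hT hte hu
  rw [← coe_S, ← hs] at hAS
  rw [← coe_T, ← ht] at hAT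
  apply aux_infinite φ A hA
  have gen : ∀ x ∈ ({S, T} : Set SL(2, ℤ)), A * (x : Mat) = ((φ x : SL(2, ℤ)) : Mat) * A ∨
      A * (x : Mat) = -(((φ x : SL(2, ℤ)) : Mat) * A) := by
    rintro x (rfl | rfl)
    · rcases he with rfl | rfl
      · left; simpa using hAS
      · right; simpa using hAS
    · rcases he with rfl | rfl
      · left; simpa using hAT
      · right; simpa using hAT
  intro g
  have hg : g ∈ Subgroup.closure {S, T} := by simp [SpecialLinearGroup.SL2Z_generators]
  induction hg using Subgroup.closure_induction with
  | mem x hx => exact gen x hx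
  | one => left; rw [map_one]; exact (mul_one A).trans (one_mul A).symm
  | mul x y _ _ hx hy =>
    rw [map_mul, cm, cm, ← Matrix.mul_assoc]
    rcases hx with hx | hx <;> rcases hy with hy | hy <;>
      simp [hx, hy, Matrix.mul_assoc]
  | inv x _ hx =>
    have h1 : (x : Mat) * ((x⁻¹ : SL(2, ℤ)) : Mat) = 1 := by
      rw [← cm, mul_inv_cancel]; rfl
    have h2 : ((φ x⁻¹ : SL(2, ℤ)) : Mat) * ((φ x : SL(2, ℤ)) : Mat) = 1 := by
      rw [← cm, ← map_mul, inv_mul_cancel, map_one]; rfl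
    have h3 : ((φ x⁻¹ : SL(2, ℤ)) : Mat) * A = ((φ x⁻¹ : SL(2, ℤ)) : Mat) *
        (A * (x : Mat)) * ((x⁻¹ : SL(2, ℤ)) : Mat) := by
      rw [Matrix.mul_assoc, Matrix.mul_assoc, h1, Matrix.mul_one]
    rcases hx with hx | hx
    · left
      rw [h3, hx, ← Matrix.mul_assoc, h2, Matrix.one_mul]
    · right
      rw [h3, hx, Matrix.mul_neg, ← Matrix.mul_assoc, h2, Matrix.one_mul, Matrix.neg_mul, neg_neg]

/-- `SL(2, ℤ)` has the `R∞`-property: every automorphism of `SL(2, ℤ)` has infinitely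
many twisted conjugacy classes. -/
theorem stmt11 (φ : Matrix.SpecialLinearGroup (Fin 2) ℤ ≃* Matrix.SpecialLinearGroup (Fin 2) ℤ) :
    Infinite (Quot (TwistedConj φ)) :=
  main_aux φ _ _ _ _ _ _ _ _ (Matrix.eta_fin_two _) (Matrix.eta_fin_two _)
end

section
/- The infinite dihedral group D∞ (the semidirect product of ℤ by ℤ/2 acting by negation) has the R∞-property: for every automorphism φ of D∞ there are infinitely many φ-twisted conjugacy classes. -/
namespace Stmt12Aux
open DihedralGroup

/-- Rotation with an honest integer index. -/
def R (i : ℤ) : DihedralGroup 0 := DihedralGroup.r i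
/-- Reflection with an honest integer index. -/
def S (i : ℤ) : DihedralGroup 0 := DihedralGroup.sr i

lemma RR (i j : ℤ) : R i * R j = R (i + j) := rfl
lemma RS (i j : ℤ) : R i * S j = S (j - i) := rfl
lemma SR (i j : ℤ) : S i * R j = S (i + j) := rfl
lemma SS (i j : ℤ) : S i * S j = R (j - i) := rfl
lemma Rinv (i : ℤ) : (R i)⁻¹ = R (-i) := rfl
lemma Sinv (i : ℤ) : (S i)⁻¹ = S i := rfl
lemma R0 : (1 : DihedralGroup 0) = R 0 := rfl
lemma R_inj {i j : ℤ} (h : R i = R j) : i = j := by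
  unfold R at h; injection h
lemma S_ne_R {i j : ℤ} (h : S i = R j) : False := by
  unfold S R at h; injection h
lemma R_or_S (x : DihedralGroup 0) : (∃ i, x = R i) ∨ ∃ i, x = S i := by
  rcases x with i | i
  · exact Or.inl ⟨i, rfl⟩
  · exact Or.inr ⟨i, rfl⟩
lemma Rzpow (i k : ℤ) : (R i) ^ k = R (i * k) := by
  induction k with
  | zero => simp [R0]
  | succ n ih => rw [zpow_add_one, ih, RR]; congr 1; ring
  | pred n ih => rw [zpow_sub_one, ih, Rinv, RR]; congr 1; ring

lemma map_R_one (φ : DihedralGroup 0 ≃* DihedralGroup 0) : ∃ e, φ (R 1) = R e := by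
  rcases R_or_S (φ (R 1)) with h | ⟨j, h⟩
  · exact h
  · exfalso
    have h2 : φ (R 1 * R 1) = φ 1 := by
      rw [map_mul, h, SS, map_one, R0, sub_self]
    have := R_inj (φ.injective h2)
    omega

lemma map_R (φ : DihedralGroup 0 ≃* DihedralGroup 0) {e : ℤ} (h : φ (R 1) = R e) (i : ℤ) :
    φ (R i) = R (e * i) := by
  have : R i = R 1 ^ i := by rw [Rzpow, one_mul]
  rw [this, map_zpow, h, Rzpow]

lemma map_S_zero (φ : DihedralGroup 0 ≃* DihedralGroup 0) : ∃ c, φ (S 0) = S c := by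
  rcases R_or_S (φ (S 0)) with ⟨j, h⟩ | h
  · exfalso
    have h2 : φ (S 0 * S 0) = R (j + j) := by rw [map_mul, h, RR]
    rw [SS, sub_self, ← R0, map_one, R0] at h2
    have hj : j = 0 := by have := R_inj h2; omega
    rw [hj, ← R0, ← map_one φ] at h
    exact S_ne_R (φ.injective h)
  · exact h

lemma exists_params (φ : DihedralGroup 0 ≃* DihedralGroup 0) :
    ∃ e c : ℤ, (e = 1 ∨ e = -1) ∧ (∀ i, φ (R i) = R (e * i)) ∧ ∀ i, φ (S i) = S (c + e * i) := by
  obtain ⟨e, he⟩ := map_R_one φ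
  obtain ⟨d, hd⟩ := map_R_one φ.symm
  obtain ⟨c, hc⟩ := map_S_zero φ
  refine ⟨e, c, ?_, map_R φ he, fun i => ?_⟩
  · have h1 : φ (φ.symm (R 1)) = R 1 := φ.apply_symm_apply _
    rw [hd, map_R φ he] at h1
    exact Int.eq_one_or_neg_one_of_mul_eq_one (R_inj h1)
  · have : S i = S 0 * R i := by rw [SR, zero_add]
    rw [this, map_mul, hc, map_R φ he, SR]

/-- Equal to `a` on rotations and `b` on reflections. -/
def inv (a b : ℤ → ℤ) : DihedralGroup 0 → ℤ
  | .r i => a i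
  | .sr i => b i

lemma inv_R (a b : ℤ → ℤ) (i : ℤ) : inv a b (R i) = a i := rfl
lemma inv_S (a b : ℤ → ℤ) (i : ℤ) : inv a b (S i) = b i := rfl

lemma infinite_of {Γ : Type*} [Group Γ] (φ : Γ ≃* Γ) (c : ℤ) (f : Γ → ℤ) (u : ℤ → Γ)
    (hu : ∀ i, f (u i) = (2 * i - c) ^ 2)
    (hf : ∀ x g, f x = f (g * x * (φ g)⁻¹)) : Infinite (Quot (TwistedConj φ)) := by
  refine Infinite.of_injective
    (fun n : ℕ => (Quot.mk _ (u (n + |c|)) : Quot (TwistedConj φ))) ?_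
  intro m n h
  have h2 := congrArg (Quot.lift f (by rintro x y ⟨g, rfl⟩; exact hf x g)) h
  simp only [hu] at h2
  have hc := le_abs_self c
  have hc_nonneg := abs_nonneg c
  have h3 := (sq_eq_sq₀ (by omega) (by omega)).1 h2
  omega

end Stmt12Aux

open Stmt12Aux in
/-- The infinite dihedral group `D∞` (in Mathlib, `DihedralGroup 0`) has the
`R∞`-property: every automorphism of `D∞` has infinitely many twisted conjugacy
classes. -/
theorem stmt12 (φ : DihedralGroup 0 ≃* DihedralGroup 0) :
    Infinite (Quot (TwistedConj φ)) := by
  obtain ⟨e, c, he, hR, hS⟩ := exists_params φ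
  rcases he with rfl | rfl
  · refine infinite_of φ c (Stmt12Aux.inv (fun i => (2 * i - c) ^ 2) fun _ => -1) R
      (fun i => rfl) ?_
    intro x g
    rcases R_or_S x with ⟨i, rfl⟩ | ⟨i, rfl⟩ <;> rcases R_or_S g with ⟨k, rfl⟩ | ⟨k, rfl⟩ <;>
      simp only [hR, hS, Rinv, Sinv, RR, RS, SR, SS, inv_R, inv_S] <;> ring
  · refine infinite_of φ c (Stmt12Aux.inv (fun _ => -1) fun i => (2 * i - c) ^ 2) S
      (fun i => rfl) ?_
    intro x g
    rcases R_or_S x with ⟨i, rfl⟩ | ⟨i, rfl⟩ <;> rcases R_or_S g with ⟨k, rfl⟩ | ⟨k, rfl⟩ <;>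
      simp only [hR, hS, Rinv, Sinv, RR, RS, SR, SS, inv_R, inv_S] <;> ring
end
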